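/- Let F be the free group on a finite generating set S, let R be a finite subset of F, and let N be the normal closure of R in F. Then the subgroup A = { (x, y) ∈ F × F | x⁻¹ * y ∈ N } of F × F (the fibre product over the quotient F/N) is generated by the finite set { (1, r) | r ∈ R } ∪ { (s, s) | s ∈ S }. -/

import Mathlib

/-!
A subgroup `H` of `G × G` containing the diagonal is determined by `N = {n | (1, n) ∈ H}`: this
subgroup is normal because conjugation by `(g, g)` preserves `H`, and `(x, y) = (x, x) (1, x⁻¹ y)`
lies in `H` if and only if `x⁻¹ y ∈ N`. When `H` is generated by the diagonal and the elements
`(1, r)` with `r ∈ R`, the normal subgroup `N` contains `R` and hence its normal closure; it is no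
larger, since the two components of each generator agree modulo that normal closure.
-/

section

variable {G : Type*} [Group G]

/-- The fibre product of `G` with itself over `G ⧸ N`, as a subgroup of `G × G`: the pairs whose
components have the same image in the quotient. For `N` the normal closure of the relators of a
presentation it is the Mihailova subgroup. -/
def fibreSquare (N : Subgroup G) [N.Normal] : Subgroup (G × G) :=
  ((QuotientGroup.mk' N).comp (MonoidHom.fst G G)).eqLocus
    ((QuotientGroup.mk' N).comp (MonoidHom.snd G G))

theorem mem_fibreSquare {N : Subgroup G} [N.Normal] {x y : G} :
    (x, y) ∈ fibreSquare N ↔ x⁻¹ * y ∈ N :=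
  QuotientGroup.eq

theorem diag_mem_of_closure_range_eq_top {ι : Type*} {s : ι → G}
    (hs : Subgroup.closure (Set.range s) = ⊤) {H : Subgroup (G × G)}
    (hH : ∀ i, (s i, s i) ∈ H) (g : G) : (g, g) ∈ H := by
  have closure_le : Subgroup.closure (Set.range s) ≤
      H.comap ((MonoidHom.id G).prod (MonoidHom.id G)) :=
    (Subgroup.closure_le _).2 (Set.range_subset_iff.2 hH)
  exact closure_le (hs ▸ Subgroup.mem_top g)

theorem mem_iff_inv_mul_mem_goursatSnd {H : Subgroup (G × G)} (hdiag : ∀ g, (g, g) ∈ H)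
    {x y : G} : (x, y) ∈ H ↔ x⁻¹ * y ∈ H.goursatSnd := by
  have factor : (x, y) = (x, x) * (1, x⁻¹ * y) := by simp
  rw [factor, H.mul_mem_cancel_left (hdiag x), Subgroup.mem_goursatSnd]

theorem fibreSquare_normalClosure_le {R : Set G} {H : Subgroup (G × G)}
    (hdiag : ∀ g, (g, g) ∈ H) (hR : ∀ r ∈ R, (1, r) ∈ H) :
    fibreSquare (Subgroup.normalClosure R) ≤ H := by
  have normal : H.goursatSnd.Normal :=
    Subgroup.normal_goursatSnd fun g => ⟨⟨(g, g), hdiag g⟩, rfl⟩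
  have normalClosure_le : Subgroup.normalClosure R ≤ H.goursatSnd :=
    Subgroup.normalClosure_le_normal fun r hr => Subgroup.mem_goursatSnd.2 (hR r hr)
  rintro ⟨x, y⟩ hxy
  exact (mem_iff_inv_mul_mem_goursatSnd hdiag).2 (normalClosure_le (mem_fibreSquare.1 hxy))

theorem mihailova_subgroup_generated_general (R : Set G) {ι : Type*} {s : ι → G}
    (hs : Subgroup.closure (Set.range s) = ⊤) :
    Subgroup.closure ((fun r => ((1 : G), r)) '' R ∪ Set.range fun i => (s i, s i)) =
      fibreSquare (Subgroup.normalClosure R) := by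
  apply le_antisymm
  · rw [Subgroup.closure_le]
    rintro _ (⟨r, hr, rfl⟩ | ⟨i, rfl⟩)
    · exact mem_fibreSquare.2 (by simpa using Subgroup.subset_normalClosure hr)
    · exact mem_fibreSquare.2 (by simp)
  · apply fibreSquare_normalClosure_le
    · exact diag_mem_of_closure_range_eq_top hs fun i =>
        Subgroup.subset_closure (.inr ⟨i, rfl⟩)
    · exact fun r hr => Subgroup.subset_closure (.inl ⟨r, hr, rfl⟩)

end

/-- Mihailova subgroup generation: for the free group `F` on a finite set `S` and a finite
set `R ⊆ F` with normal closure `N`, the fibre product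
`A = {(x, y) ∈ F × F | x⁻¹ y ∈ N}` is generated by
`{(1, r) | r ∈ R} ∪ {(of s, of s) | s ∈ S}`. -/
theorem mihailova_subgroup_generated {S : Type*} [Finite S] (R : Finset (FreeGroup S)) :
    ∀ x y : FreeGroup S,
      (x, y) ∈
          Subgroup.closure
            ((fun r => ((1 : FreeGroup S), r)) '' (R : Set (FreeGroup S)) ∪
              Set.range fun s => (FreeGroup.of s, FreeGroup.of s)) ↔
        x⁻¹ * y ∈ Subgroup.normalClosure (R : Set (FreeGroup S)) := by
  intro x y
  rw [mihailova_subgroup_generated_general _ (FreeGroup.closure_range_of S), mem_fibreSquare]
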